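/- Second-moment identity for state 2-designs (variance computation for the 2-design learning protocol): let d ≥ 1 and let {(p_i, ψ_i)} be a finite ensemble that is a state 2-design in ℂ^d. Then for every d×d complex matrix B, Σ_i p_i · tr[B · ψ_i ψ_i*] · ( d(d+1)· ψ_i ψ_i* − d · I_d )² = d(d−1)·B + d²·tr[B]·I_d. -/

import Mathlib

/-!
Write `P = ψψ*` for a unit vector `ψ`, so that `P² = P` and `tr P = 1`. Contracting the 2-design
identity against `B` in the first tensor factor gives `Σ p_i tr[B P_i] P_i = (tr[B] I + B)/(d(d+1))`
(`weighted_projector_sum`), and the trace of this is `Σ p_i tr[B P_i] = tr[B]/d`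
(`weighted_trace_sum`). Since
`(d(d+1) P - d I)² = d(d+1) · d(d-1) · P + d² I`, the second-moment sum is
`d(d-1)(tr[B] I + B) + d tr[B] I = d(d-1) B + d² tr[B] I`.
-/

noncomputable section

open Matrix
open scoped Kronecker

/-- The rank-one projector `ψψ*` onto a vector `ψ ∈ ℂ^d`. -/
def projVec {d : ℕ} (ψ : Fin d → ℂ) : Matrix (Fin d) (Fin d) ℂ :=
  Matrix.vecMulVec ψ (star ψ)

/-- The swap matrix on `ℂ^d ⊗ ℂ^d`: `SWAP_{(i,j),(k,l)} = 1` if `i = l` and `j = k`, else `0`. -/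
def swapMat (d : ℕ) : Matrix (Fin d × Fin d) (Fin d × Fin d) ℂ :=
  Matrix.of fun p q => if p.1 = q.2 ∧ p.2 = q.1 then 1 else 0

lemma projVec_trace {d : ℕ} {ψ : Fin d → ℂ} (h : ∑ x, Complex.normSq (ψ x) = 1) :
    (projVec ψ).trace = 1 := by
  have h' := congrArg (fun r : ℝ => (r : ℂ)) h
  simpa [projVec, Matrix.trace, Matrix.vecMulVec_apply, Complex.mul_conj] using h'

lemma projVec_mul_self {d : ℕ} {ψ : Fin d → ℂ} (h : ∑ x, Complex.normSq (ψ x) = 1) :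
    projVec ψ * projVec ψ = projVec ψ := by
  have ht : star ψ ⬝ᵥ ψ = 1 := by
    rw [dotProduct_comm, ← Matrix.trace_vecMulVec]
    exact projVec_trace h
  unfold projVec
  rw [Matrix.vecMulVec_mul_vecMulVec, ht, one_smul]

/-- The partial trace of the 2-design identity against `B ⊗ I` over the first tensor factor. -/
lemma weighted_projector_sum {d : ℕ} {ι : Type*} [Fintype ι] (p : ι → ℝ) (ψ : ι → (Fin d → ℂ))
    (hdesign : ∑ i, (p i : ℂ) • (projVec (ψ i) ⊗ₖ projVec (ψ i)) =
      ((d : ℂ) * ((d : ℂ) + 1))⁻¹ •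
        ((1 : Matrix (Fin d × Fin d) (Fin d × Fin d) ℂ) + swapMat d))
    (B : Matrix (Fin d) (Fin d) ℂ) :
    ∑ i, ((p i : ℂ) * (B * projVec (ψ i)).trace) • projVec (ψ i) =
      ((d : ℂ) * ((d : ℂ) + 1))⁻¹ • (B.trace • (1 : Matrix (Fin d) (Fin d) ℂ) + B) := by
  ext j l
  have key : ∀ a b, ∑ i, (p i : ℂ) * (projVec (ψ i) b a * projVec (ψ i) j l) =
      ((d : ℂ) * ((d : ℂ) + 1))⁻¹ *
        ((if b = a ∧ j = l then 1 else 0) + if b = l ∧ j = a then 1 else 0) := by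
    intro a b
    have := congrFun (congrFun hdesign (b, j)) (a, l)
    simpa [Matrix.sum_apply, Matrix.one_apply, swapMat] using this
  calc (∑ i, ((p i : ℂ) * (B * projVec (ψ i)).trace) • projVec (ψ i)) j l
      = ∑ a, ∑ b, B a b * ∑ i, (p i : ℂ) * (projVec (ψ i) b a * projVec (ψ i) j l) := by
        simp only [Matrix.sum_apply, Matrix.smul_apply, smul_eq_mul, Matrix.trace,
          Matrix.diag_apply, Matrix.mul_apply, Finset.mul_sum, Finset.sum_mul]
        rw [Finset.sum_comm]
        refine Finset.sum_congr rfl fun a _ => ?_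
        rw [Finset.sum_comm]
        refine Finset.sum_congr rfl fun b _ => Finset.sum_congr rfl fun i _ => ?_
        ring
    _ = _ := by
        simp only [key, mul_left_comm (B _ _), ← Finset.mul_sum, mul_add,
          Finset.sum_add_distrib, ite_and]
        by_cases hjl : j = l <;>
          simp [hjl, Matrix.trace, mul_add]

lemma weighted_trace_sum {d : ℕ} (hd : 1 ≤ d) {ι : Type*} [Fintype ι]
    (p : ι → ℝ) (ψ : ι → (Fin d → ℂ))
    (hunit : ∀ i, ∑ x, Complex.normSq (ψ i x) = 1)
    (hdesign : ∑ i, (p i : ℂ) • (projVec (ψ i) ⊗ₖ projVec (ψ i)) =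
      ((d : ℂ) * ((d : ℂ) + 1))⁻¹ •
        ((1 : Matrix (Fin d × Fin d) (Fin d × Fin d) ℂ) + swapMat d))
    (B : Matrix (Fin d) (Fin d) ℂ) :
    ∑ i, (p i : ℂ) * (B * projVec (ψ i)).trace = (d : ℂ)⁻¹ * B.trace := by
  have h := congrArg Matrix.trace (weighted_projector_sum p ψ hdesign B)
  simp only [Matrix.trace_sum, Matrix.trace_smul, Matrix.trace_add, Matrix.trace_one,
    projVec_trace (hunit _), smul_eq_mul, mul_one, Fintype.card_fin] at h
  rw [h]
  have h0 : (d : ℂ) ≠ 0 := by exact_mod_cast (by omega : d ≠ 0)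
  have h1 : (d : ℂ) + 1 ≠ 0 := by exact_mod_cast Nat.succ_ne_zero d
  field_simp

/-- Second-moment identity for state 2-designs (variance computation for the 2-design
learning protocol): if `{(p_i, ψ_i)}` is a finite ensemble forming a state 2-design in `ℂ^d`,
then for every `d×d` matrix `B`,
`Σ_i p_i tr[B ψ_iψ_i*] (d(d+1) ψ_iψ_i* − d·I)² = d(d−1)·B + d²·tr[B]·I`. -/
theorem twoDesign_second_moment
    {d : ℕ} (hd : 1 ≤ d) {ι : Type*} [Fintype ι]
    (p : ι → ℝ) (ψ : ι → (Fin d → ℂ))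
    (hp : ∀ i, 0 ≤ p i) (hpsum : ∑ i, p i = 1)
    (hunit : ∀ i, ∑ x, Complex.normSq (ψ i x) = 1)
    (hdesign : ∑ i, (p i : ℂ) • (projVec (ψ i) ⊗ₖ projVec (ψ i)) =
      ((d : ℂ) * ((d : ℂ) + 1))⁻¹ •
        ((1 : Matrix (Fin d × Fin d) (Fin d × Fin d) ℂ) + swapMat d)) :
    ∀ B : Matrix (Fin d) (Fin d) ℂ,
      ∑ i, (p i : ℂ) • ((B * projVec (ψ i)).trace •
        (((d : ℂ) * ((d : ℂ) + 1)) • projVec (ψ i) -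
          (d : ℂ) • (1 : Matrix (Fin d) (Fin d) ℂ)) ^ 2) =
      ((d : ℂ) * ((d : ℂ) - 1)) • B +
        ((d : ℂ) ^ 2 * B.trace) • (1 : Matrix (Fin d) (Fin d) ℂ) := by
  intro B
  have h0 : (d : ℂ) ≠ 0 := by exact_mod_cast (by omega : d ≠ 0)
  have h1 : (d : ℂ) + 1 ≠ 0 := by exact_mod_cast Nat.succ_ne_zero d
  have hsq : ∀ i, (((d : ℂ) * ((d : ℂ) + 1)) • projVec (ψ i) -
      (d : ℂ) • (1 : Matrix (Fin d) (Fin d) ℂ)) ^ 2 =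
      ((d : ℂ) * ((d : ℂ) + 1) * ((d : ℂ) * ((d : ℂ) - 1))) • projVec (ψ i) +
        ((d : ℂ) ^ 2) • (1 : Matrix (Fin d) (Fin d) ℂ) := by
    intro i
    simp only [sq, sub_mul, mul_sub, smul_mul_assoc, mul_smul_comm, mul_one, one_mul,
      projVec_mul_self (hunit i)]
    module
  have hsplit : ∀ i, (p i : ℂ) • ((B * projVec (ψ i)).trace •
        (((d : ℂ) * ((d : ℂ) + 1)) • projVec (ψ i) -
          (d : ℂ) • (1 : Matrix (Fin d) (Fin d) ℂ)) ^ 2) =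
      ((d : ℂ) * ((d : ℂ) + 1) * ((d : ℂ) * ((d : ℂ) - 1))) •
        (((p i : ℂ) * (B * projVec (ψ i)).trace) • projVec (ψ i)) +
      ((p i : ℂ) * (B * projVec (ψ i)).trace) •
        (((d : ℂ) ^ 2) • (1 : Matrix (Fin d) (Fin d) ℂ)) := by
    intro i
    rw [hsq]
    module
  simp only [hsplit]
  rw [Finset.sum_add_distrib, ← Finset.smul_sum, ← Finset.sum_smul,
    weighted_projector_sum p ψ hdesign B, weighted_trace_sum hd p ψ hunit hdesign B]
  match_scalars <;> field_simp <;> ring
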